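/- There exist at least 92 pairwise inequivalent s-extremal singly even self-dual [56,28,10] codes; that is, there exist at least 92 pairwise inequivalent singly even self-dual codes of length 56 with minimum weight 10 whose shadows have minimum weight 12. -/

import Mathlib

open Finset

/-- Hamming weight of a binary vector. -/
def wt {n : ℕ} (x : Fin n → ZMod 2) : ℕ := hammingNorm x

/-- The dual of a set of binary vectors with respect to the standard inner product. -/
def dualSet {n : ℕ} (C : Set (Fin n → ZMod 2)) : Set (Fin n → ZMod 2) :=
  {x | ∀ y ∈ C, ∑ i, x i * y i = 0}

/-- A binary linear code is self-dual if it equals its dual code. -/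
def IsSelfDual {n : ℕ} (C : Submodule (ZMod 2) (Fin n → ZMod 2)) : Prop :=
  (C : Set (Fin n → ZMod 2)) = dualSet (C : Set (Fin n → ZMod 2))

/-- A self-dual code is singly even if some codeword has weight not divisible by 4. -/
def IsSinglyEvenSelfDual {n : ℕ} (C : Submodule (ZMod 2) (Fin n → ZMod 2)) : Prop :=
  IsSelfDual C ∧ ∃ x ∈ C, ¬ (4 ∣ wt x)

/-- The doubly even subcode `C₀` of `C` (as a set): codewords of weight ≡ 0 (mod 4). -/
def evenSub {n : ℕ} (C : Submodule (ZMod 2) (Fin n → ZMod 2)) : Set (Fin n → ZMod 2) :=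
  {x | x ∈ C ∧ 4 ∣ wt x}

/-- The shadow `S = C₀^⊥ \ C` of a singly even self-dual code. -/
def shadow {n : ℕ} (C : Submodule (ZMod 2) (Fin n → ZMod 2)) : Set (Fin n → ZMod 2) :=
  dualSet (evenSub C) \ (C : Set (Fin n → ZMod 2))

/-- The minimum (nonzero) weight of a set of vectors. -/
noncomputable def minWtSet {n : ℕ} (S : Set (Fin n → ZMod 2)) : ℕ :=
  sInf {w | ∃ x ∈ S, x ≠ 0 ∧ wt x = w}

/-- The minimum weight of a code. -/
noncomputable def minWt {n : ℕ} (C : Submodule (ZMod 2) (Fin n → ZMod 2)) : ℕ :=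
  minWtSet (C : Set (Fin n → ZMod 2))

/-- A singly even self-dual code of length `n` is s-extremal if
`d(S) = n/2 + 4 - 2 d(C)`. -/
def IsSExtremal {n : ℕ} (C : Submodule (ZMod 2) (Fin n → ZMod 2)) : Prop :=
  IsSinglyEvenSelfDual C ∧
    (minWtSet (shadow C) : ℤ) = ((n / 2 : ℕ) : ℤ) + 4 - 2 * (minWt C : ℤ)

/-- Two codes are equivalent if one is obtained from the other by permuting coordinates. -/
def CodeEquiv {n : ℕ} (C D : Submodule (ZMod 2) (Fin n → ZMod 2)) : Prop :=
  ∃ σ : Equiv.Perm (Fin n),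
    Submodule.map (LinearMap.funLeft (ZMod 2) (ZMod 2) σ) C = D

/-- The neighbor `C₀ ∪ (t + C₀)` of `C` obtained from a shadow vector `t`:
the span of the doubly even subcode together with `t`. -/
def neighborCode {n : ℕ} (C : Submodule (ZMod 2) (Fin n → ZMod 2))
    (t : Fin n → ZMod 2) : Submodule (ZMod 2) (Fin n → ZMod 2) :=
  Submodule.span (ZMod 2) (evenSub C ∪ {t})

open scoped Matrix

/-!
Let `D` be a doubly even self-dual `[56, 28, 12]` code and let `t` be a vector of weight `10` which
has minimum weight in its coset `t + D`. The words of `D ∪ (t + D)` orthogonal to `t` form a singly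
even self-dual code of minimum weight `10`, a neighbor of `D`. Its shadow consists of the words of
`D ∪ (t + D)` not orthogonal to `t`. They have weights divisible by `4`, hence at least `12`, and
since `t` is not in `D`, which is its own dual, one of the generators of `D`, all of weight `12`,
is among them.

The words of weight `10` of such a neighbor are exactly those of `t + D`. Let `λ(a, b)` be the
number of these words which are nonzero at both `a` and `b`. The sum of all `λ(a, b) ^ 2` is
invariant under permutations of the coordinates, and it takes different values for `92` vectors `t`.

To check this, take a generator matrix `(1 | A)` of `D` with `A` orthogonal. A word of weight at
most `10` in `t + D` has at most `5` ones in its first half or at most `4` in its second half, and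
it is an affine function of that half. All light halves are processed simultaneously by bitwise
arithmetic on large natural numbers.
-/

/-! ### Neighbors of doubly even codes -/

section EvenNeighbor

variable {n : ℕ} {x y t : Fin n → ZMod 2} {C D : Submodule (ZMod 2) (Fin n → ZMod 2)}

theorem zmod_two_eq_one_of_ne_zero : ∀ {a : ZMod 2}, a ≠ 0 → a = 1 := by
  decide

theorem wt_eq_sum (x : Fin n → ZMod 2) : wt x = ∑ i, (x i).val := by
  rw [wt, hammingNorm, Finset.card_filter]
  have h : ∀ a : ZMod 2, (if a ≠ 0 then 1 else 0) = a.val := by decide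
  exact Finset.sum_congr rfl fun i _ => h (x i)

theorem wt_zero : wt (0 : Fin n → ZMod 2) = 0 :=
  hammingNorm_zero

theorem ne_zero_of_wt_pos (hx : 0 < wt x) : x ≠ 0 :=
  hammingNorm_pos_iff.1 hx

theorem wt_comp_perm (x : Fin n → ZMod 2) (σ : Equiv.Perm (Fin n)) : wt (x ∘ σ) = wt x := by
  simpa only [wt_eq_sum, Function.comp_apply] using Equiv.sum_comp σ fun i => (x i).val

theorem wt_eq_val_add_wt_tail (x : Fin (n + 1) → ZMod 2) :
    wt x = (x 0).val + wt (Fin.tail x) := by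
  simp only [wt_eq_sum, Fin.sum_univ_succ, Fin.tail]

theorem dotProduct_self (x : Fin n → ZMod 2) : x ⬝ᵥ x = wt x := by
  have h : ∀ a : ZMod 2, a * a = a.val := by decide
  rw [wt_eq_sum, Nat.cast_sum]
  exact Finset.sum_congr rfl fun i _ => h (x i)

theorem wt_add_mod_four (x y : Fin n → ZMod 2) :
    wt (x + y) % 4 = (wt x + wt y + 2 * (x ⬝ᵥ y).val) % 4 := by
  have h_val : ∀ a b : ZMod 2, (a + b).val + 2 * (a * b).val = a.val + b.val := by decide
  have h_sum : wt (x + y) + 2 * ∑ i, (x i * y i).val = wt x + wt y := by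
    simp only [wt_eq_sum, Finset.mul_sum, ← Finset.sum_add_distrib, Pi.add_apply, h_val]
  have h_dot : (x ⬝ᵥ y).val = (∑ i, (x i * y i).val) % 2 := by
    rw [← ZMod.val_natCast, Nat.cast_sum]
    simp only [ZMod.natCast_zmod_val, dotProduct]
  lia

theorem minWtSet_eq {S : Set (Fin n → ZMod 2)} (hx : x ∈ S) (h0 : x ≠ 0)
    (hmin : ∀ y ∈ S, y ≠ 0 → wt x ≤ wt y) : minWtSet S = wt x :=
  IsLeast.csInf_eq ⟨⟨x, hx, h0, rfl⟩, by rintro _ ⟨y, hy, hy0, rfl⟩; exact hmin y hy hy0⟩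

theorem IsSelfDual.mem_iff (hC : IsSelfDual C) : x ∈ C ↔ ∀ y ∈ C, x ⬝ᵥ y = 0 :=
  Set.ext_iff.1 hC x

theorem IsSelfDual.dotProduct_eq_zero (hC : IsSelfDual C) (hx : x ∈ C) (hy : y ∈ C) :
    x ⬝ᵥ y = 0 :=
  hC.mem_iff.1 hx y hy

theorem IsSelfDual.two_mul_finrank (hC : IsSelfDual C) :
    2 * Module.finrank (ZMod 2) C = n := by
  let e := (dotProductEquiv (ZMod 2) (Fin n)).toLinearMap
  have h_perp : (C.map e).dualCoannihilator = C := by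
    ext x
    rw [Submodule.mem_dualCoannihilator, hC.mem_iff]
    constructor
    · intro h y hy
      rw [dotProduct_comm]
      exact h (e y) (Submodule.mem_map_of_mem hy)
    · rintro h _ ⟨y, hy, rfl⟩
      exact (dotProduct_comm y x).trans (h y hy)
  have h_rank := Subspace.finrank_add_finrank_dualCoannihilator_eq (C.map e)
  rw [h_perp, LinearEquiv.finrank_map_eq, Module.finrank_fin_fun] at h_rank
  lia

/-- Doubly even self-dual codes: self-dual codes all of whose weights are divisible by `4`. -/
structure IsDoublyEvenSelfDual (D : Submodule (ZMod 2) (Fin n → ZMod 2)) : Prop where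
  isSelfDual : IsSelfDual D
  four_dvd_wt : ∀ x ∈ D, 4 ∣ wt x

/-- The neighbor of a doubly even self-dual code `D` along `t`: the vectors of `D ∪ (t + D)`
orthogonal to `t`. If `wt t % 4 = 2`, it is a singly even self-dual code meeting `D` in its doubly
even subcode. -/
def evenNeighbor (D : Submodule (ZMod 2) (Fin n → ZMod 2)) (t : Fin n → ZMod 2) :
    Submodule (ZMod 2) (Fin n → ZMod 2) :=
  (D ⊔ ZMod 2 ∙ t) ⊓ LinearMap.ker (dotProductEquiv (ZMod 2) (Fin n) t)

theorem mem_evenNeighbor : x ∈ evenNeighbor D t ↔ (x ∈ D ∨ x + t ∈ D) ∧ t ⬝ᵥ x = 0 := by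
  have h_sup : x ∈ D ⊔ ZMod 2 ∙ t ↔ x ∈ D ∨ x + t ∈ D := by
    rw [sup_comm, ← Submodule.span_eq D, ← Submodule.span_insert, Submodule.mem_span_insert']
    simp only [Submodule.span_eq]
    constructor
    · rintro ⟨a, ha⟩
      by_cases h : a = 0
      · exact .inl (by simpa [h] using ha)
      · exact .inr (by simpa [zmod_two_eq_one_of_ne_zero h] using ha)
    · rintro (h | h)
      · exact ⟨0, by simpa using h⟩
      · exact ⟨1, by simpa using h⟩
  rw [evenNeighbor, Submodule.mem_inf, h_sup]
  rfl

namespace IsDoublyEvenSelfDual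

theorem wt_mod_four_of_add_mem (hD : IsDoublyEvenSelfDual D) (ht : wt t % 4 = 2)
    (hx : x + t ∈ D) : wt x % 4 = (2 + 2 * (t ⬝ᵥ x).val) % 4 := by
  have h_self : t ⬝ᵥ t = 0 := by
    rw [dotProduct_self, ZMod.natCast_eq_zero_iff]
    lia
  have h_add := wt_add_mod_four (x + t) t
  rw [add_assoc, ZModModule.add_self, add_zero, add_dotProduct, h_self, add_zero,
    dotProduct_comm] at h_add
  have := hD.four_dvd_wt _ hx
  lia

theorem dotProduct_eq_zero_iff_of_add_mem (hD : IsDoublyEvenSelfDual D) (ht : wt t % 4 = 2)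
    (hx : x + t ∈ D) : t ⬝ᵥ x = 0 ↔ wt x % 4 = 2 := by
  have := hD.wt_mod_four_of_add_mem ht hx
  have := ZMod.val_lt (t ⬝ᵥ x)
  rw [← ZMod.val_eq_zero]
  lia

theorem self_mem_evenNeighbor (hD : IsDoublyEvenSelfDual D) (ht : wt t % 4 = 2) :
    t ∈ evenNeighbor D t := by
  have h : t + t ∈ D := by rw [ZModModule.add_self]; exact D.zero_mem
  exact mem_evenNeighbor.2 ⟨.inr h, (hD.dotProduct_eq_zero_iff_of_add_mem ht h).2 ht⟩

theorem of_span (hD : IsSelfDual D) {G : Set (Fin n → ZMod 2)}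
    (hG : Submodule.span (ZMod 2) G = D) (hG_wt : ∀ g ∈ G, 4 ∣ wt g) :
    IsDoublyEvenSelfDual D where
  isSelfDual := hD
  four_dvd_wt x hx := by
    rw [← hG] at hx
    induction hx using Submodule.span_induction with
    | mem g hg => exact hG_wt g hg
    | zero => simp [wt_zero]
    | add x y hx hy hx4 hy4 =>
      have h_add := wt_add_mod_four x y
      rw [hD.dotProduct_eq_zero (hG ▸ hx) (hG ▸ hy), ZMod.val_zero] at h_add
      lia
    | smul a x _ hx4 =>
      by_cases h : a = 0
      · simp [h, wt_zero]
      · simpa [zmod_two_eq_one_of_ne_zero h] using hx4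

theorem exists_dotProduct_eq_one_of_span (hD : IsDoublyEvenSelfDual D) (ht : wt t % 4 = 2)
    {G : Set (Fin n → ZMod 2)} (hG : Submodule.span (ZMod 2) G = D) : ∃ g ∈ G, t ⬝ᵥ g = 1 := by
  have h_not_mem : t ∉ D := fun h => by
    have := hD.four_dvd_wt t h
    lia
  contrapose! h_not_mem
  have h_le : D ≤ LinearMap.ker (dotProductEquiv (ZMod 2) (Fin n) t) := by
    rw [← hG, Submodule.span_le]
    exact fun g hg => by_contra fun h => h_not_mem g hg (zmod_two_eq_one_of_ne_zero h)
  exact hD.isSelfDual.mem_iff.2 fun y hy => h_le hy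

-- The vectors of `D` orthogonal to `t` have index `2` in `D`, so their dual has only the
-- cosets `D` and `t + D`.
theorem mem_or_add_mem_of_orthogonal (hD : IsDoublyEvenSelfDual D) (ht : wt t % 4 = 2)
    (hx : ∀ y ∈ D, t ⬝ᵥ y = 0 → x ⬝ᵥ y = 0) : x ∈ D ∨ x + t ∈ D := by
  obtain ⟨d, hd, htd⟩ := hD.exists_dotProduct_eq_one_of_span ht (Submodule.span_eq D)
  have h_mem : x + (x ⬝ᵥ d) • t ∈ D := by
    rw [hD.isSelfDual.mem_iff]
    intro y hy
    have h := hx (y + (t ⬝ᵥ y) • d) (D.add_mem hy (D.smul_mem _ hd)) (by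
      rw [dotProduct_add, dotProduct_smul, htd, smul_eq_mul, mul_one, ZModModule.add_self])
    rwa [dotProduct_add, dotProduct_smul, smul_eq_mul, mul_comm, ← smul_eq_mul,
      ← smul_dotProduct, ← add_dotProduct] at h
  by_cases h0 : x ⬝ᵥ d = 0
  · exact .inl (by simpa [h0] using h_mem)
  · exact .inr (by simpa [zmod_two_eq_one_of_ne_zero h0] using h_mem)

theorem evenSub_evenNeighbor (hD : IsDoublyEvenSelfDual D) (ht : wt t % 4 = 2) :
    evenSub (evenNeighbor D t) = {x | x ∈ D ∧ t ⬝ᵥ x = 0} := by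
  ext x
  simp only [evenSub, mem_evenNeighbor, Set.mem_ofPred_eq]
  constructor
  · rintro ⟨⟨h | h, h0⟩, h4⟩
    · exact ⟨h, h0⟩
    · have := (hD.dotProduct_eq_zero_iff_of_add_mem ht h).1 h0
      lia
  · rintro ⟨h, h0⟩
    exact ⟨⟨.inl h, h0⟩, hD.four_dvd_wt x h⟩

theorem dotProduct_eq_zero_of_mem_or_add_mem (hD : IsDoublyEvenSelfDual D)
    (hx : x ∈ D ∨ x + t ∈ D) (hy : y ∈ D) (hty : t ⬝ᵥ y = 0) : x ⬝ᵥ y = 0 := by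
  obtain hx | hx := hx
  · exact hD.isSelfDual.dotProduct_eq_zero hx hy
  · simpa [add_dotProduct, hty] using hD.isSelfDual.dotProduct_eq_zero hx hy

theorem isSelfDual_evenNeighbor (hD : IsDoublyEvenSelfDual D) (ht : wt t % 4 = 2) :
    IsSelfDual (evenNeighbor D t) := by
  apply Set.Subset.antisymm
  · intro x hx y hy
    change x ⬝ᵥ y = 0
    rw [SetLike.mem_coe, mem_evenNeighbor] at hx hy
    obtain ⟨hy | hy, hty⟩ := hy
    · exact hD.dotProduct_eq_zero_of_mem_or_add_mem hx.1 hy hty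
    · have htt := (mem_evenNeighbor.1 (hD.self_mem_evenNeighbor ht)).2
      have h := hD.dotProduct_eq_zero_of_mem_or_add_mem hx.1 hy (by
        rw [dotProduct_add, hty, htt, add_zero])
      rwa [dotProduct_add, dotProduct_comm x t, hx.2, add_zero] at h
  · intro x hx
    refine mem_evenNeighbor.2 ⟨hD.mem_or_add_mem_of_orthogonal ht fun y hy hty => ?_, ?_⟩
    · exact hx y (mem_evenNeighbor.2 ⟨.inl hy, hty⟩)
    · rw [dotProduct_comm]
      exact hx t (hD.self_mem_evenNeighbor ht)

theorem isSinglyEvenSelfDual_evenNeighbor (hD : IsDoublyEvenSelfDual D) (ht : wt t % 4 = 2) :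
    IsSinglyEvenSelfDual (evenNeighbor D t) :=
  ⟨hD.isSelfDual_evenNeighbor ht, t, hD.self_mem_evenNeighbor ht, by lia⟩

theorem shadow_evenNeighbor (hD : IsDoublyEvenSelfDual D) (ht : wt t % 4 = 2) :
    shadow (evenNeighbor D t) = {x | (x ∈ D ∨ x + t ∈ D) ∧ t ⬝ᵥ x = 1} := by
  rw [_root_.shadow, hD.evenSub_evenNeighbor ht]
  ext x
  constructor
  · rintro ⟨h, hx⟩
    have h_mem := hD.mem_or_add_mem_of_orthogonal ht fun y hy hty => h y ⟨hy, hty⟩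
    exact ⟨h_mem, zmod_two_eq_one_of_ne_zero fun h0 => hx (mem_evenNeighbor.2 ⟨h_mem, h0⟩)⟩
  · rintro ⟨h, h1⟩
    refine ⟨fun y hy => hD.dotProduct_eq_zero_of_mem_or_add_mem h hy.1 hy.2, fun hx => ?_⟩
    simp [(mem_evenNeighbor.1 hx).2] at h1

theorem minWt_evenNeighbor (hD : IsDoublyEvenSelfDual D) (ht : wt t % 4 = 2)
    (hD_min : ∀ x ∈ D, x ≠ 0 → wt t ≤ wt x) (ht_min : ∀ x, x + t ∈ D → wt t ≤ wt x) :
    minWt (evenNeighbor D t) = wt t := by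
  refine minWtSet_eq (hD.self_mem_evenNeighbor ht) (ne_zero_of_wt_pos (by lia)) fun x hx h0 => ?_
  obtain ⟨hx | hx, -⟩ := mem_evenNeighbor.1 hx
  exacts [hD_min x hx h0, ht_min x hx]

theorem minWtSet_shadow_evenNeighbor (hD : IsDoublyEvenSelfDual D) (ht : wt t % 4 = 2)
    (hD_min : ∀ x ∈ D, x ≠ 0 → wt t + 2 ≤ wt x) (ht_min : ∀ x, x + t ∈ D → wt t ≤ wt x)
    {d : Fin n → ZMod 2} (hd : d ∈ D) (hd_wt : wt d = wt t + 2) (htd : t ⬝ᵥ d = 1) :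
    minWtSet (shadow (evenNeighbor D t)) = wt t + 2 := by
  rw [hD.shadow_evenNeighbor ht, ← hd_wt]
  refine minWtSet_eq ⟨.inl hd, htd⟩ (ne_zero_of_wt_pos (by lia)) ?_
  rintro x ⟨hx | hx, h1⟩ h0
  · exact hd_wt ▸ hD_min x hx h0
  · have h_mod : wt x % 4 ≠ 2 := by
      rw [ne_eq, ← hD.dotProduct_eq_zero_iff_of_add_mem ht hx, h1]
      decide
    have h_coset := hD.wt_mod_four_of_add_mem ht hx
    have := ht_min x hx
    lia

theorem mem_evenNeighbor_iff_add_mem (hD : IsDoublyEvenSelfDual D) (ht : wt t % 4 = 2)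
    (hx : wt x % 4 = 2) : x ∈ evenNeighbor D t ↔ x + t ∈ D := by
  rw [mem_evenNeighbor]
  constructor
  · rintro ⟨h | h, -⟩
    · have := hD.four_dvd_wt x h
      lia
    · exact h
  · exact fun h => ⟨.inr h, (hD.dotProduct_eq_zero_iff_of_add_mem ht h).2 hx⟩

end IsDoublyEvenSelfDual

/-! ### Pair degrees -/

/-- The number of words of `S` that are nonzero at both coordinates `a` and `b`. -/
noncomputable def pairDegree (S : Set (Fin n → ZMod 2)) (a b : Fin n) : ℕ :=
  {x ∈ S | x a ≠ 0 ∧ x b ≠ 0}.ncard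

/-- The second moment of the pair degrees of `S`. Applied to the words of a fixed weight it is an
invariant of code equivalence, used here to tell codes apart. -/
noncomputable def pairMoment (S : Set (Fin n → ZMod 2)) : ℕ :=
  ∑ b, ∑ a, pairDegree S a b ^ 2

theorem pairDegree_union {S T : Set (Fin n → ZMod 2)} (h : Disjoint S T) :
    pairDegree (S ∪ T) = pairDegree S + pairDegree T := by
  funext a b
  rw [Pi.add_apply, Pi.add_apply, pairDegree, pairDegree, pairDegree,
    ← Set.ncard_union_eq (h.mono (Set.sep_subset _ _) (Set.sep_subset _ _))]
  exact congrArg Set.ncard (Set.ext fun _ => or_and_right)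

theorem pairDegree_image_comp_perm (S : Set (Fin n → ZMod 2)) (σ : Equiv.Perm (Fin n))
    (a b : Fin n) : pairDegree ((· ∘ σ) '' S) a b = pairDegree S (σ a) (σ b) := by
  have h_inj : Function.Injective fun x : Fin n → ZMod 2 => x ∘ σ :=
    σ.surjective.injective_comp_right
  rw [pairDegree, pairDegree, ← Set.ncard_image_of_injective {x ∈ S | _} h_inj]
  congr 1
  ext x
  constructor
  · rintro ⟨⟨y, hy, rfl⟩, h⟩
    exact ⟨y, ⟨hy, h⟩, rfl⟩
  · rintro ⟨y, ⟨hy, h⟩, rfl⟩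
    exact ⟨⟨y, hy, rfl⟩, h⟩

theorem pairMoment_image_comp_perm (S : Set (Fin n → ZMod 2)) (σ : Equiv.Perm (Fin n)) :
    pairMoment ((· ∘ σ) '' S) = pairMoment S := by
  simp only [pairMoment, pairDegree_image_comp_perm]
  rw [Equiv.sum_comp σ fun b => ∑ a, pairDegree S (σ a) b ^ 2]
  exact Finset.sum_congr rfl fun b _ => Equiv.sum_comp σ fun a => pairDegree S a b ^ 2

theorem CodeEquiv.pairMoment_eq (h : CodeEquiv C D) (w : ℕ) :
    pairMoment {x | x ∈ D ∧ wt x = w} = pairMoment {x | x ∈ C ∧ wt x = w} := by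
  obtain ⟨σ, rfl⟩ := h
  rw [← pairMoment_image_comp_perm {x | x ∈ C ∧ wt x = w} σ]
  congr 1
  ext x
  constructor
  · rintro ⟨⟨y, hy, rfl⟩, rfl⟩
    exact ⟨y, ⟨hy, (wt_comp_perm y σ).symm⟩, rfl⟩
  · rintro ⟨y, ⟨hy, rfl⟩, rfl⟩
    exact ⟨⟨y, hy, rfl⟩, wt_comp_perm y σ⟩

theorem IsDoublyEvenSelfDual.words_evenNeighbor (hD : IsDoublyEvenSelfDual D)
    (ht : wt t % 4 = 2) :
    {x | x ∈ evenNeighbor D t ∧ wt x = wt t} = {x | x + t ∈ D ∧ wt x = wt t} :=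
  Set.ext fun _ => and_congr_left fun h => hD.mem_evenNeighbor_iff_add_mem ht (h ▸ ht)

end EvenNeighbor

/-! ### Systematic codes -/

section SystematicCode

variable {m n : ℕ} {A : Matrix (Fin m) (Fin m) (ZMod 2)} {x y t : Fin (m + m) → ZMod 2}

theorem append_comp_castAdd (y : Fin m → ZMod 2) (z : Fin n → ZMod 2) :
    Fin.append y z ∘ Fin.castAdd n = y :=
  funext (Fin.append_left y z)

theorem append_comp_natAdd (y : Fin m → ZMod 2) (z : Fin n → ZMod 2) :
    Fin.append y z ∘ Fin.natAdd m = z :=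
  funext (Fin.append_right y z)

theorem wt_append (y : Fin m → ZMod 2) (z : Fin n → ZMod 2) :
    wt (Fin.append y z) = wt y + wt z := by
  simp only [wt_eq_sum, Fin.sum_univ_add, Fin.append_left, Fin.append_right]

theorem wt_castAdd_add_wt_natAdd (x : Fin (m + n) → ZMod 2) :
    wt (x ∘ Fin.castAdd n) + wt (x ∘ Fin.natAdd m) = wt x := by
  rw [← wt_append]
  exact congrArg wt Fin.append_castAdd_natAdd

theorem dotProduct_eq_castAdd_add_natAdd (x y : Fin (m + n) → ZMod 2) :
    x ⬝ᵥ y = (x ∘ Fin.castAdd n) ⬝ᵥ (y ∘ Fin.castAdd n) +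
      (x ∘ Fin.natAdd m) ⬝ᵥ (y ∘ Fin.natAdd m) :=
  Fin.sum_univ_add _

theorem add_eq_iff_eq_add_of_zmod_two {a b c : Fin n → ZMod 2} : a + b = c ↔ a = c + b := by
  rw [← ZModModule.sub_eq_add c, eq_sub_iff_add_eq]

/-- The code with systematic generator matrix `(1 | A)`, given by its parity checks. -/
def systematicCode (A : Matrix (Fin m) (Fin n) (ZMod 2)) :
    Submodule (ZMod 2) (Fin (m + n) → ZMod 2) :=
  LinearMap.eqLocus (LinearMap.funLeft (ZMod 2) (ZMod 2) (Fin.natAdd m))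
    (A.vecMulLinear ∘ₗ LinearMap.funLeft (ZMod 2) (ZMod 2) (Fin.castAdd n))

/-- The rows of the generator matrix `(1 | A)`. -/
def systematicRow (A : Matrix (Fin m) (Fin n) (ZMod 2)) (k : Fin m) : Fin (m + n) → ZMod 2 :=
  Fin.append (Pi.single k 1) (A k)

theorem mem_systematicCode {A : Matrix (Fin m) (Fin n) (ZMod 2)} {x : Fin (m + n) → ZMod 2} :
    x ∈ systematicCode A ↔ x ∘ Fin.natAdd m = (x ∘ Fin.castAdd n) ᵥ* A :=
  Iff.rfl

theorem mem_systematicCode_iff_castAdd (hA : A * Aᵀ = 1) :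
    x ∈ systematicCode A ↔ x ∘ Fin.castAdd m = A *ᵥ (x ∘ Fin.natAdd m) := by
  rw [mem_systematicCode, ← Matrix.vecMul_transpose]
  constructor <;> intro h
  · rw [h, Matrix.vecMul_vecMul, hA, Matrix.vecMul_one]
  · rw [h, Matrix.vecMul_vecMul, mul_eq_one_comm.1 hA, Matrix.vecMul_one]

theorem span_range_systematicRow (A : Matrix (Fin m) (Fin n) (ZMod 2)) :
    Submodule.span (ZMod 2) (Set.range (systematicRow A)) = systematicCode A := by
  apply le_antisymm
  · rw [Submodule.span_le, Set.range_subset_iff]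
    intro k
    rw [SetLike.mem_coe, mem_systematicCode, systematicRow, append_comp_castAdd,
      append_comp_natAdd, Matrix.single_one_vecMul]
    rfl
  · intro x hx
    have h_sum : x = ∑ k, x (Fin.castAdd n k) • systematicRow A k := by
      funext i
      rw [Finset.sum_apply]
      induction i using Fin.addCases with
      | left i => simp [systematicRow, Pi.single_apply]
      | right i =>
        simpa [systematicRow, Matrix.vecMul, dotProduct] using
          congrFun (mem_systematicCode.1 hx) i
    rw [h_sum]
    exact Submodule.sum_mem _ fun k _ =>
      Submodule.smul_mem _ _ (Submodule.subset_span (Set.mem_range_self k))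

theorem isSelfDual_systematicCode (hA : A * Aᵀ = 1) : IsSelfDual (systematicCode A) := by
  apply Set.Subset.antisymm
  · intro x hx y hy
    change x ⬝ᵥ y = 0
    have h_halves : (x ∘ Fin.natAdd m) ⬝ᵥ (y ∘ Fin.natAdd m) =
        (x ∘ Fin.castAdd m) ⬝ᵥ (y ∘ Fin.castAdd m) := by
      rw [mem_systematicCode.1 hx, ← Matrix.dotProduct_mulVec,
        (mem_systematicCode_iff_castAdd hA).1 hy]
    rw [dotProduct_eq_castAdd_add_natAdd, h_halves, ZModModule.add_self]
  · intro x hx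
    rw [SetLike.mem_coe, mem_systematicCode_iff_castAdd hA]
    funext k
    have h_row : x ⬝ᵥ systematicRow A k = 0 :=
      hx _ (span_range_systematicRow A ▸ Submodule.subset_span (Set.mem_range_self k))
    rw [dotProduct_eq_castAdd_add_natAdd, systematicRow, append_comp_castAdd,
      append_comp_natAdd, dotProduct_single_one, dotProduct_comm] at h_row
    exact CharTwo.add_eq_zero.1 h_row

theorem isDoublyEvenSelfDual_systematicCode (hA : A * Aᵀ = 1)
    (hA_wt : ∀ k, 4 ∣ wt (systematicRow A k)) : IsDoublyEvenSelfDual (systematicCode A) :=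
  .of_span (isSelfDual_systematicCode hA) (span_range_systematicRow A)
    (Set.forall_mem_range.2 hA_wt)

theorem add_mem_systematicCode_iff_natAdd {A : Matrix (Fin m) (Fin n) (ZMod 2)}
    {x t : Fin (m + n) → ZMod 2} : x + t ∈ systematicCode A ↔ x ∘ Fin.natAdd m =
      (x ∘ Fin.castAdd n) ᵥ* A + ((t ∘ Fin.castAdd n) ᵥ* A + t ∘ Fin.natAdd m) := by
  rw [← add_assoc, ← Matrix.add_vecMul, ← add_eq_iff_eq_add_of_zmod_two]
  rfl

theorem add_mem_systematicCode_iff_castAdd (hA : A * Aᵀ = 1) :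
    x + t ∈ systematicCode A ↔ x ∘ Fin.castAdd m =
      A *ᵥ (x ∘ Fin.natAdd m) + (A *ᵥ (t ∘ Fin.natAdd m) + t ∘ Fin.castAdd m) := by
  rw [← add_assoc, ← Matrix.mulVec_add, ← add_eq_iff_eq_add_of_zmod_two]
  exact mem_systematicCode_iff_castAdd hA

end SystematicCode

/-! ### Bit-sliced families of words -/

/-- A list of `card` binary words in bit-sliced form: bit `j` of the `i`th entry of `slices` is
coordinate `i` of the `j`th word. This lets the kernel treat all words at once by arithmetic of
large natural numbers. -/
structure WordFamily where
  card : ℕ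
  slices : List ℕ

namespace WordFamily

section Enumeration

variable {m n : ℕ} {F G : WordFamily} {S T : Set (Fin m → ZMod 2)}

/-- Bit `j` of `u`, as an element of the field with two elements. -/
def bit (u j : ℕ) : ZMod 2 :=
  (u.testBit j).toNat

/-- The first `m` binary digits of `t`, least significant first, as a vector. -/
def digits (m t : ℕ) : Fin m → ZMod 2 :=
  fun i => bit t i

/-- The matrix whose rows are the binary digits of the entries of `rows`. -/
def ofRows (m n : ℕ) (rows : List ℕ) : Matrix (Fin m) (Fin n) (ZMod 2) :=
  fun i => digits n (rows.getD i 0)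

/-- The `j`th word, of length `m`, of the bit-sliced family `us`. -/
def word (m : ℕ) (us : List ℕ) (j : ℕ) : Fin m → ZMod 2 :=
  fun i => bit (us.getD i 0) j

/-- The family `F` lists every word of `S` exactly once. -/
structure Enumerates (F : WordFamily) (S : Set (Fin m → ZMod 2)) : Prop where
  length_slices : F.slices.length = m
  bijOn : Set.BijOn (word m F.slices) (Set.Iio F.card) S

/-- The number with `N` binary digits, all equal to `b`. -/
def fill (N : ℕ) (b : Bool) : ℕ :=
  b.toNat * (2 ^ N - 1)

/-- The family obtained from `F` by putting the coordinate `b` in front of every word. -/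
def cons (b : Bool) (F : WordFamily) : WordFamily :=
  ⟨F.card, fill F.card b :: F.slices⟩

/-- The words of `F` followed by the words of `G`. -/
def append (F G : WordFamily) : WordFamily :=
  ⟨F.card + G.card, List.zipWith (fun u v => u % 2 ^ F.card ||| v <<< F.card) F.slices G.slices⟩

/-- The words of length `m` and weight at most `r`. -/
def light : ℕ → ℕ → WordFamily
  | 0, _ => ⟨1, []⟩
  | m + 1, 0 => (light m 0).cons false
  | m + 1, r + 1 => ((light m (r + 1)).cons false).append ((light m r).cons true)

/-- The bitwise sum of the entries of the list at the positions of the binary digits `1` of `c`. -/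
def selectXor : List ℕ → ℕ → ℕ
  | [], _ => 0
  | u :: us, c => (c % 2 * u) ^^^ selectXor us (c / 2)

/-- The slices of the image of `F` under the affine map with matrix `rows` and translation `s`. -/
def image (rows : List ℕ) (s : ℕ) (F : WordFamily) : List ℕ :=
  rows.mapIdx fun i c => selectXor F.slices c ^^^ fill F.card (s.testBit i)

theorem bit_eq_ite (u j : ℕ) : bit u j = if u.testBit j then 1 else 0 := by
  cases h : u.testBit j <;> simp [bit, h]

theorem bit_xor (u v j : ℕ) : bit (u ^^^ v) j = bit u j + bit v j := by
  simp only [bit_eq_ite, Nat.testBit_xor]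
  cases u.testBit j <;> cases v.testBit j <;> decide

theorem testBit_fill (N : ℕ) (b : Bool) (j : ℕ) :
    (fill N b).testBit j = (b && decide (j < N)) := by
  cases b <;> simp [fill]

theorem bit_fill {N j : ℕ} (b : Bool) (hj : j < N) : bit (fill N b) j = b.toNat := by
  simp [bit, testBit_fill, hj]

theorem word_cons (u : ℕ) (us : List ℕ) (j : ℕ) :
    word (m + 1) (u :: us) j = Fin.cons (bit u j) (word m us j) := by
  funext i
  induction i using Fin.cases <;> rfl

theorem word_append (us vs : List ℕ) (hus : us.length = m) (j : ℕ) :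
    word (m + n) (us ++ vs) j = Fin.append (word m us j) (word n vs j) := by
  funext i
  induction i using Fin.addCases with
  | left i =>
    rw [Fin.append_left]
    exact congrArg (bit · j) (List.getD_append _ _ _ _ (by rw [hus]; exact i.isLt))
  | right i =>
    rw [Fin.append_right]
    refine congrArg (bit · j) ((List.getD_append_right _ _ _ _ ?_).trans ?_) <;> simp [hus]

theorem word_zipWith {us vs : List ℕ} (hus : us.length = m) (hvs : vs.length = m) (N j : ℕ) :
    word m (List.zipWith (fun u v => u % 2 ^ N ||| v <<< N) us vs) j =
      if j < N then word m us j else word m vs (j - N) := by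
  funext i
  have hi_us : (i : ℕ) < us.length := hus ▸ i.isLt
  have hi_vs : (i : ℕ) < vs.length := hvs ▸ i.isLt
  by_cases hj : j < N <;>
    simp [word, bit, List.getD_eq_getElem?_getD, hi_us, hi_vs, Nat.testBit_mod_two_pow, hj,
      Nat.not_le.2, Nat.not_lt.1]

theorem Enumerates.cons (hF : Enumerates F S) (b : Bool) :
    Enumerates (F.cons b) {x : Fin (m + 1) → ZMod 2 | x 0 = b.toNat ∧ Fin.tail x ∈ S} where
  length_slices := congrArg (· + 1) hF.length_slices
  bijOn := by
    have h_cons : Set.BijOn (Fin.cons (b.toNat : ZMod 2)) S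
        {x : Fin (m + 1) → ZMod 2 | x 0 = b.toNat ∧ Fin.tail x ∈ S} :=
      ⟨fun x hx => ⟨rfl, hx⟩, (Fin.cons_right_injective _).injOn,
        fun x hx => ⟨Fin.tail x, hx.2, by rw [← hx.1, Fin.cons_self_tail]⟩⟩
    refine (h_cons.comp hF.bijOn).congr fun j hj => ?_
    rw [Function.comp_apply, ← bit_fill b hj]
    exact (word_cons _ _ _).symm

theorem Enumerates.append (hF : Enumerates F S) (hG : Enumerates G T) (h : Disjoint S T) :
    Enumerates (F.append G) (S ∪ T) where
  length_slices := by simp [WordFamily.append, hF.length_slices, hG.length_slices]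
  bijOn := by
    have h_word := word_zipWith hF.length_slices hG.length_slices F.card
    have h_left : Set.BijOn (word m (F.append G).slices) (Set.Iio F.card) S :=
      hF.bijOn.congr fun j hj => ((h_word j).trans (if_pos hj)).symm
    have h_shift : Set.BijOn (· - F.card) (Set.Ico F.card (F.card + G.card)) (Set.Iio G.card) :=
      ⟨fun j hj => by simp at hj ⊢; lia, fun i hi j hj hij => by simp at hi hj hij; lia,
        fun j hj => ⟨F.card + j, by simpa using hj, by simp⟩⟩
    have h_right : Set.BijOn (word m (F.append G).slices)
        (Set.Ico F.card (F.card + G.card)) T :=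
      (hG.bijOn.comp h_shift).congr fun j hj => ((h_word j).trans (if_neg (not_lt.2 hj.1))).symm
    have h_disj : Disjoint (Set.Iio F.card) (Set.Ico F.card (F.card + G.card)) :=
      (Set.Iio_disjoint_Ici le_rfl).mono_right Set.Ico_subset_Ici_self
    have h_inj := (Set.injOn_union h_disj).2 ⟨h_left.injOn, h_right.injOn,
      fun i hi j hj => h.ne_of_mem (h_left.mapsTo hi) (h_right.mapsTo hj)⟩
    have h_union := h_left.union h_right h_inj
    rwa [Set.Iio_union_Ico_eq_Iio (Nat.le_add_right _ _)] at h_union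

theorem enumerates_light (m r : ℕ) : Enumerates (light m r) {x : Fin m → ZMod 2 | wt x ≤ r} := by
  have h_cases : ∀ a : ZMod 2, a = 0 ∨ a = 1 := by decide
  induction m generalizing r with
  | zero => exact ⟨rfl, fun _ _ => by simp [wt_eq_sum], fun i hi j hj _ => by simp_all [light],
      fun x _ => ⟨0, by simp [light], Subsingleton.elim _ _⟩⟩
  | succ m ih =>
    cases r with
    | zero =>
      rw [light]
      convert (ih 0).cons false using 1
      ext x
      obtain h | h := h_cases (x 0) <;> simp [wt_eq_val_add_wt_tail x, h, ZMod.val_one]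
    | succ r =>
      rw [light]
      convert ((ih (r + 1)).cons false).append ((ih r).cons true) ?_ using 1
      · ext x
        obtain h | h := h_cases (x 0) <;>
          simp [wt_eq_val_add_wt_tail x, h, ZMod.val_one, add_comm 1]
      · refine Set.disjoint_left.2 fun x hx hx' => ?_
        simp [hx.1] at hx'

theorem bit_selectXor (us : List ℕ) (hus : us.length = m) (c j : ℕ) :
    bit (selectXor us c) j = digits m c ⬝ᵥ word m us j := by
  subst hus
  induction us generalizing c with
  | nil => simp [selectXor, bit]
  | cons u us ih =>
    have h_mod : bit (c % 2 * u) j = bit c 0 * bit u j := by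
      obtain h | h := Nat.mod_two_eq_zero_or_one c <;> simp [bit, h]
    rw [selectXor, bit_xor, ih, h_mod]
    simp [dotProduct, Fin.sum_univ_succ, digits, word, bit, Nat.testBit_succ]

theorem word_image {rows : List ℕ} (hrows : rows.length = n) (hF : F.slices.length = m) (s : ℕ)
    {j : ℕ} (hj : j < F.card) :
    word n (F.image rows s) j = ofRows n m rows *ᵥ word m F.slices j + digits n s := by
  funext i
  have hi : (i : ℕ) < rows.length := hrows ▸ i.isLt
  simp only [word, image, List.getD_eq_getElem?_getD, List.getElem?_mapIdx,
    List.getElem?_eq_getElem hi, Option.map_some, Option.getD_some, bit_xor, bit_selectXor _ hF]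
  simp [Matrix.mulVec, ofRows, hi, bit_fill _ hj]
  rfl

theorem digits_selectXor (rows : List ℕ) (hrows : rows.length = m) (t : ℕ) :
    digits n (selectXor rows t) = digits m t ᵥ* ofRows m n rows := by
  funext i
  exact bit_selectXor rows hrows t i

/-! ### Light words in cosets of systematic codes -/

theorem bijOn_append_graph (S : Set (Fin m → ZMod 2)) (g : (Fin m → ZMod 2) → Fin n → ZMod 2) :
    Set.BijOn (fun y => Fin.append y (g y)) S
      {x | x ∘ Fin.castAdd n ∈ S ∧ x ∘ Fin.natAdd m = g (x ∘ Fin.castAdd n)} :=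
  ⟨fun y hy => by simpa [append_comp_castAdd, append_comp_natAdd] using hy,
    fun y _ z _ h => by simpa only [append_comp_castAdd] using congrArg (· ∘ Fin.castAdd n) h,
    fun x hx => ⟨x ∘ Fin.castAdd n, hx.1, by
      dsimp only; rw [← hx.2]; exact Fin.append_castAdd_natAdd⟩⟩

theorem bijOn_graph_append (S : Set (Fin m → ZMod 2)) (g : (Fin m → ZMod 2) → Fin n → ZMod 2) :
    Set.BijOn (fun y => Fin.append (g y) y) S
      {x | x ∘ Fin.natAdd n ∈ S ∧ x ∘ Fin.castAdd m = g (x ∘ Fin.natAdd n)} :=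
  ⟨fun y hy => by simpa [append_comp_castAdd, append_comp_natAdd] using hy,
    fun y _ z _ h => by simpa only [append_comp_natAdd] using congrArg (· ∘ Fin.natAdd n) h,
    fun x hx => ⟨x ∘ Fin.natAdd n, hx.1, by
      dsimp only; rw [← hx.2]; exact Fin.append_castAdd_natAdd⟩⟩

theorem Enumerates.append_image (hF : Enumerates F S) {rows : List ℕ} (hrows : rows.length = n)
    (s : ℕ) : Enumerates ⟨F.card, F.slices ++ F.image rows s⟩ {x : Fin (m + n) → ZMod 2 |
      x ∘ Fin.castAdd n ∈ S ∧
        x ∘ Fin.natAdd m = ofRows n m rows *ᵥ (x ∘ Fin.castAdd n) + digits n s} where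
  length_slices := by simp [image, hF.length_slices, hrows]
  bijOn := by
    refine ((bijOn_append_graph S fun y => ofRows n m rows *ᵥ y + digits n s).comp
      hF.bijOn).congr fun j hj => ?_
    rw [Function.comp_apply, ← word_image hrows hF.length_slices s hj]
    exact (word_append _ _ hF.length_slices j).symm

theorem Enumerates.image_append (hF : Enumerates F S) {rows : List ℕ} (hrows : rows.length = n)
    (s : ℕ) : Enumerates ⟨F.card, F.image rows s ++ F.slices⟩ {x : Fin (n + m) → ZMod 2 |
      x ∘ Fin.natAdd n ∈ S ∧
        x ∘ Fin.castAdd m = ofRows n m rows *ᵥ (x ∘ Fin.natAdd n) + digits n s} where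
  length_slices := by simp [image, hF.length_slices, hrows]
  bijOn := by
    refine ((bijOn_graph_append S fun y => ofRows n m rows *ᵥ y + digits n s).comp
      hF.bijOn).congr fun j hj => ?_
    rw [Function.comp_apply, ← word_image hrows hF.length_slices s hj]
    exact (word_append _ _ (by simp [image, hrows]) j).symm

theorem digits_xor (m u v : ℕ) : digits m (u ^^^ v) = digits m u + digits m v :=
  funext fun i => bit_xor u v i

theorem digits_comp_natAdd (t : ℕ) : digits (m + n) t ∘ Fin.natAdd m = digits n (t >>> m) :=
  funext fun i => by simp [digits, bit, Nat.testBit_shiftRight]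

/-- The words `x` such that `x + t` lies in the code generated by `(1 | A)` and the first `m`
coordinates have weight at most `r`, where `rows` and `cols` encode the rows and the columns of
`A`. -/
def leftFamily (m r : ℕ) (rows cols : List ℕ) (t : ℕ) : WordFamily where
  card := (light m r).card
  slices := (light m r).slices ++ (light m r).image cols ((t >>> m) ^^^ selectXor rows t)

/-- The analogue of `leftFamily` bounding the weight of the last `m` coordinates. -/
def rightFamily (m r : ℕ) (rows cols : List ℕ) (t : ℕ) : WordFamily where
  card := (light m r).card
  slices := (light m r).image rows (t ^^^ selectXor cols (t >>> m)) ++ (light m r).slices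

theorem enumerates_leftFamily {rows cols : List ℕ} (hrows : rows.length = m)
    (hcols : cols.length = n) (h : (ofRows m n rows)ᵀ = ofRows n m cols) (r t : ℕ) :
    Enumerates (leftFamily m r rows cols t) {x : Fin (m + n) → ZMod 2 |
      wt (x ∘ Fin.castAdd n) ≤ r ∧ x + digits (m + n) t ∈ systematicCode (ofRows m n rows)} := by
  rw [leftFamily]
  convert (enumerates_light m r).append_image hcols ((t >>> m) ^^^ selectXor rows t) using 1
  ext x
  refine and_congr_right fun _ => ?_
  rw [add_mem_systematicCode_iff_natAdd, ← h, Matrix.mulVec_transpose, digits_xor,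
    digits_selectXor rows hrows, digits_comp_natAdd, add_comm (digits n _)]
  rfl

theorem enumerates_rightFamily {rows cols : List ℕ} (hrows : rows.length = m)
    (hcols : cols.length = m) (h : (ofRows m m rows)ᵀ = ofRows m m cols)
    (hA : ofRows m m rows * (ofRows m m rows)ᵀ = 1) (r t : ℕ) :
    Enumerates (rightFamily m r rows cols t) {x : Fin (m + m) → ZMod 2 |
      wt (x ∘ Fin.natAdd m) ≤ r ∧ x + digits (m + m) t ∈ systematicCode (ofRows m m rows)} := by
  rw [rightFamily]
  convert (enumerates_light m r).image_append hrows (t ^^^ selectXor cols (t >>> m)) using 1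
  ext x
  refine and_congr_right fun _ => ?_
  rw [add_mem_systematicCode_iff_castAdd hA, digits_xor, digits_selectXor cols hcols, ← h,
    Matrix.vecMul_transpose, digits_comp_natAdd, add_comm (digits m _)]
  rfl

/-! ### Words of given weight -/

/-- Adds the bit `c` to the binary number with digits `bs`, in every column at once. -/
def addBit : List ℕ → ℕ → List ℕ
  | [], c => if c = 0 then [] else [c]
  | b :: bs, c => (b ^^^ c) :: addBit bs (b &&& c)

/-- The number of ones in each column of `us`; the binary digits of these numbers are again
bit-sliced, least significant first. -/
def columnCount : List ℕ → List ℕ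
  | [] => []
  | u :: us => addBit (columnCount us) u

/-- The number stored in column `j` of the bit-sliced binary digits `cs`. -/
def columnValue (cs : List ℕ) (j : ℕ) : ℕ :=
  Nat.ofDigits 2 (cs.map fun c => (c.testBit j).toNat)

/-- The mask of those among the first `N` columns of `cs` whose value is `k`. -/
def eqMask (N : ℕ) : List ℕ → ℕ → ℕ
  | [], k => fill N (k = 0)
  | c :: cs, k => (c ^^^ fill N (!k.testBit 0)) &&& eqMask N cs (k / 2)

/-- The mask of the words of `F` of weight `k`. -/
def weightMask (F : WordFamily) (k : ℕ) : ℕ :=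
  eqMask F.card (columnCount F.slices) k

theorem columnValue_cons (c : ℕ) (cs : List ℕ) (j : ℕ) :
    columnValue (c :: cs) j = (c.testBit j).toNat + 2 * columnValue cs j := by
  simp [columnValue, Nat.ofDigits_cons]

theorem columnValue_addBit (cs : List ℕ) (c j : ℕ) :
    columnValue (addBit cs c) j = columnValue cs j + (c.testBit j).toNat := by
  induction cs generalizing c with
  | nil =>
    rw [addBit]
    split_ifs with h <;> simp [columnValue, h]
  | cons b bs ih =>
    rw [addBit, columnValue_cons, ih, columnValue_cons, Nat.testBit_xor, Nat.testBit_and]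
    cases b.testBit j <;> cases c.testBit j <;> simp <;> ring

theorem columnValue_columnCount (us : List ℕ) (j : ℕ) :
    columnValue (columnCount us) j = (us.map fun u => (u.testBit j).toNat).sum := by
  induction us with
  | nil => rfl
  | cons u us ih => rw [columnCount, columnValue_addBit, ih, List.map_cons, List.sum_cons, add_comm]

theorem testBit_eqMask (N : ℕ) (cs : List ℕ) (k j : ℕ) :
    (eqMask N cs k).testBit j = decide (j < N ∧ columnValue cs j = k) := by
  induction cs generalizing k with
  | nil => simp [eqMask, testBit_fill, columnValue, Bool.and_comm, eq_comm]
  | cons c cs ih =>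
    rw [eqMask, Nat.testBit_and, ih, Nat.testBit_xor, testBit_fill, columnValue_cons,
      Nat.testBit_zero]
    rw [Bool.eq_iff_iff]
    by_cases hj : j < N <;> cases c.testBit j <;> simp [hj] <;> lia

theorem wt_word {us : List ℕ} (hus : us.length = m) (j : ℕ) :
    wt (word m us j) = (us.map fun u => (u.testBit j).toNat).sum := by
  have h_val : ∀ b : Bool, (b.toNat : ZMod 2).val = b.toNat := by decide
  subst hus
  induction us with
  | nil => rfl
  | cons u us ih =>
    rw [List.map_cons, List.sum_cons, ← ih]
    rw [List.length_cons, word_cons, wt_eq_val_add_wt_tail]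
    exact congrArg (· + wt (word us.length us j)) (h_val (u.testBit j))

theorem testBit_weightMask (hF : F.slices.length = m) (k j : ℕ) :
    (F.weightMask k).testBit j = decide (j < F.card ∧ wt (word m F.slices j) = k) := by
  rw [weightMask, testBit_eqMask, columnValue_columnCount, wt_word hF]

end Enumeration

/-! ### Pair degrees by packed arithmetic -/

section PairCount

variable {m n k d p : ℕ} {F G : WordFamily} {S T : Set (Fin m → ZMod 2)}

/-- The positions of the binary digits `1` of `W`, where `W` has at most `2 ^ k` digits. -/
def bitPositions : ℕ → ℕ → List ℕ
  | 0, W => if W.testBit 0 then [0] else []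
  | k + 1, W => if W = 0 then [] else
      bitPositions k (W % 2 ^ 2 ^ k) ++ (bitPositions k (W >>> 2 ^ k)).map (2 ^ k + ·)

/-- The `c`th block of `2 ^ k` binary digits of `u`. -/
def block (k c u : ℕ) : ℕ :=
  u >>> (2 ^ k * c) % 2 ^ 2 ^ k

/-- If `y` has digits `y₀, y₁, … ≤ 1` in base `2 ^ 2 ^ k`, this is the number whose `b`th digit
in that base has the digits `y₀ * y_b, y₁ * y_b, …` in base `2 ^ d`. -/
def pairing (k d y : ℕ) : ℕ :=
  y * (y % (2 ^ 2 ^ k - 2 ^ d))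

/-- The sum of `pairing k d` over the words of `F` selected by the mask `W`, processed in blocks of
`2 ^ k` words. -/
def pairSum (k d W : ℕ) (F : WordFamily) : ℕ :=
  ∑ c ∈ range (F.card / 2 ^ k + 1), ((bitPositions k (block k c W)).map fun p =>
    pairing k d ((Nat.ofDigits (2 ^ 2 ^ k) (F.slices.map (block k c)) >>> p) &&&
      Nat.ofDigits (2 ^ 2 ^ k) (F.slices.map fun _ => 1))).sum

/-- The sum of the squares of the `n * n` digits of `P`, packed as in `packing`. -/
def sumSq (k d n P : ℕ) : ℕ :=
  ∑ b ∈ range n, ∑ a ∈ range n, (block k b P >>> (d * a) % 2 ^ d) ^ 2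

/-- The array `f` of numbers below `2 ^ d` as a single number. -/
def packing (k d : ℕ) (f : Fin n → Fin n → ℕ) : ℕ :=
  Nat.ofDigits (2 ^ 2 ^ k) (List.ofFn fun b => Nat.ofDigits (2 ^ d) (List.ofFn fun a => f a b))

theorem bitPositions_eq_filter (k W : ℕ) :
    bitPositions k W = (List.range (2 ^ k)).filter W.testBit := by
  induction k generalizing W with
  | zero =>
    by_cases h : W.testBit 0 <;> simp [bitPositions, h]
  | succ k ih =>
    rw [bitPositions]
    split_ifs with h
    · simp [h]
    · rw [ih, ih, pow_succ, mul_two, List.range_add, List.filter_append, List.filter_map]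
      congr 1
      · refine List.filter_congr fun p hp => ?_
        simp [Nat.testBit_mod_two_pow, List.mem_range.1 hp]
      · congr 2
        funext p
        exact Nat.testBit_shiftRight W

theorem testBit_block (c u : ℕ) (hp : p < 2 ^ k) :
    (block k c u).testBit p = u.testBit (2 ^ k * c + p) := by
  simp [block, Nat.testBit_mod_two_pow, hp, Nat.testBit_shiftRight]

theorem block_lt (k c u : ℕ) : block k c u < 2 ^ 2 ^ k :=
  Nat.mod_lt _ (by positivity)

theorem shiftRight_and_ofDigits_ones {e : ℕ} (hp : p < e) {us : List ℕ}
    (hus : ∀ u ∈ us, u < 2 ^ e) :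
    (Nat.ofDigits (2 ^ e) us >>> p) &&& Nat.ofDigits (2 ^ e) (us.map fun _ => 1) =
      Nat.ofDigits (2 ^ e) (us.map fun u => (u.testBit p).toNat) := by
  induction us with
  | nil => simp
  | cons u us ih =>
    have h_one : 1 < 2 ^ e := Nat.one_lt_two_pow (by lia)
    have h_bit : (u.testBit p).toNat < 2 ^ e := (Bool.toNat_le _).trans_lt h_one
    have h_u := hus u List.mem_cons_self
    have ih := ih fun v hv => hus v (List.mem_cons_of_mem _ hv)
    refine Nat.eq_of_testBit_eq fun j => ?_
    simp only [List.map_cons, Nat.ofDigits_cons, add_comm _ (2 ^ e * _), Nat.testBit_and,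
      Nat.testBit_shiftRight, Nat.testBit_two_pow_mul_add _ h_u,
      Nat.testBit_two_pow_mul_add _ h_one, Nat.testBit_two_pow_mul_add _ h_bit]
    obtain rfl | hj0 := Nat.eq_zero_or_pos j
    · have he : 0 < e := by lia
      cases u.testBit p <;> simp [hp, he]
    by_cases hj : j < e
    · have h_false : ∀ v, v < 2 → v.testBit j = false := fun v hv =>
        Nat.testBit_lt_two_pow (hv.trans_le (Nat.le_self_pow hj0.ne' 2))
      simp [hj, h_false, (Bool.toNat_lt (u.testBit p))]
    · have h_ih := congrArg (Nat.testBit · (j - e)) ih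
      have h_sub : p + j - e = p + (j - e) := by lia
      simpa [Nat.testBit_two_pow_mul_add _ h_u, hj, h_sub, show ¬ p + j < e by lia] using h_ih

theorem ofDigits_ofFn (b : ℕ) (c : Fin n → ℕ) :
    Nat.ofDigits b (List.ofFn c) = ∑ i, c i * b ^ (i : ℕ) := by
  induction n with
  | zero => simp
  | succ n ih =>
    rw [List.ofFn_succ, Nat.ofDigits_cons, ih, Fin.sum_univ_succ, Finset.mul_sum]
    simp [pow_succ, mul_comm, mul_left_comm]

theorem ofDigits_ofFn_shiftRight_mod {e : ℕ} {c : Fin n → ℕ} (hc : ∀ i, c i < 2 ^ e) (i : Fin n) :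
    Nat.ofDigits (2 ^ e) (List.ofFn c) >>> (e * i) % 2 ^ e = c i := by
  have h_lt : ∀ l ∈ List.ofFn c, l < 2 ^ e := List.forall_mem_ofFn_iff.2 hc
  rw [Nat.shiftRight_eq_div_pow, pow_mul,
    Nat.ofDigits_div_pow_eq_ofDigits_drop _ (by positivity) _ h_lt,
    List.drop_eq_getElem_cons (by simp), Nat.ofDigits_cons]
  simp [Nat.mod_eq_of_lt (hc i)]

theorem ofDigits_ofFn_lt (hd : 0 < d) {c : Fin n → ℕ} (hc : ∀ i, c i < 2 ^ d) :
    Nat.ofDigits (2 ^ d) (List.ofFn c) < 2 ^ (d * n) := by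
  rw [pow_mul]
  simpa using
    Nat.ofDigits_lt_base_pow_length (Nat.one_lt_two_pow hd.ne') (List.forall_mem_ofFn_iff.2 hc)

theorem sumSq_packing (hd : 0 < d) (h : d * n ≤ 2 ^ k) {f : Fin n → Fin n → ℕ}
    (hf : ∀ a b, f a b < 2 ^ d) : sumSq k d n (packing k d f) = ∑ b, ∑ a, f a b ^ 2 := by
  have h_col : ∀ b, Nat.ofDigits (2 ^ d) (List.ofFn fun a => f a b) < 2 ^ 2 ^ k := fun b =>
    (ofDigits_ofFn_lt hd fun a => hf a b).trans_le (Nat.pow_le_pow_right two_pos h)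
  simp only [sumSq, Finset.sum_range, packing, block, ofDigits_ofFn_shiftRight_mod h_col]
  exact Finset.sum_congr rfl fun b _ => Finset.sum_congr rfl fun a _ => by
    rw [ofDigits_ofFn_shiftRight_mod fun a => hf a b]

theorem packing_eq_sum (k d : ℕ) (f : Fin n → Fin n → ℕ) :
    packing k d f =
      ∑ b : Fin n, ∑ a : Fin n, f a b * ((2 ^ d) ^ (a : ℕ) * (2 ^ 2 ^ k) ^ (b : ℕ)) := by
  simp only [packing, ofDigits_ofFn, Finset.sum_mul, mul_assoc]

theorem packing_sum {ι : Type*} (s : Finset ι) (k d : ℕ) (f : ι → Fin n → Fin n → ℕ) :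
    ∑ i ∈ s, packing k d (f i) = packing k d (∑ i ∈ s, f i) := by
  simp only [packing_eq_sum, Finset.sum_apply, Finset.sum_mul]
  rw [Finset.sum_comm]
  exact Finset.sum_congr rfl fun b _ => Finset.sum_comm

theorem packing_add (k d : ℕ) (f g : Fin n → Fin n → ℕ) :
    packing k d f + packing k d g = packing k d (f + g) := by
  simp only [packing_eq_sum, Pi.add_apply, add_mul, Finset.sum_add_distrib]

theorem pairing_ofDigits (hd : 0 < d) (h : d * n < 2 ^ k) (x : Fin n → ZMod 2) :
    pairing k d (Nat.ofDigits (2 ^ 2 ^ k) (List.ofFn fun i => (x i).val)) =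
      packing k d fun a b => (x a).val * (x b).val := by
  obtain rfl | hn := Nat.eq_zero_or_pos n
  · rfl
  have h_lt := ofDigits_ofFn_lt hd fun i =>
    (ZMod.val_lt (x i)).trans_le (Nat.le_self_pow hd.ne' 2)
  have h_pow : 2 ^ (d * n) + 2 ^ d ≤ 2 ^ 2 ^ k := calc
    2 ^ (d * n) + 2 ^ d ≤ 2 ^ (d * n) * 2 := by
      have := Nat.pow_le_pow_right two_pos (Nat.le_mul_of_pos_right d hn)
      lia
    _ ≤ 2 ^ 2 ^ k := by
      rw [← pow_succ]
      exact Nat.pow_le_pow_right two_pos h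
  have h_base : 2 ^ 2 ^ k ≡ 2 ^ d [MOD 2 ^ 2 ^ k - 2 ^ d] :=
    ((Nat.modEq_iff_dvd' (by lia)).2 dvd_rfl).symm
  have h_mod := Nat.ofDigits_modEq' _ _ _ h_base (List.ofFn fun i => (x i).val)
  rw [pairing, h_mod, Nat.mod_eq_of_lt (by lia), packing_eq_sum, ofDigits_ofFn, ofDigits_ofFn,
    Finset.sum_mul_sum]
  exact Finset.sum_congr rfl fun b _ => Finset.sum_congr rfl fun a _ => by ring

theorem sum_range_sum_range_mul_add (L Q : ℕ) (f : ℕ → ℕ) :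
    ∑ c ∈ range Q, ∑ p ∈ range L, f (L * c + p) = ∑ j ∈ range (L * Q), f j := by
  induction Q with
  | zero => simp
  | succ Q ih => rw [Finset.sum_range_succ, ih, mul_add_one, Finset.sum_range_add]

theorem map_testBit_eq_ofFn (hF : F.slices.length = m) (j : ℕ) :
    (F.slices.map fun u => (u.testBit j).toNat) = List.ofFn fun i => (word m F.slices j i).val := by
  have h_val : ∀ b : Bool, (b.toNat : ZMod 2).val = b.toNat := by decide
  subst hF
  refine List.ext_getElem (by simp) fun i hi _ => ?_
  rw [List.length_map] at hi
  simp [word, bit, h_val]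

theorem sum_map_bitPositions_block (k c W : ℕ) (f : ℕ → ℕ) :
    ((bitPositions k (block k c W)).map f).sum =
      ∑ p ∈ range (2 ^ k), if W.testBit (2 ^ k * c + p) then f p else 0 := by
  rw [bitPositions_eq_filter, ← List.sum_toFinset f (List.nodup_range.filter _),
    List.toFinset_filter, List.toFinset_range, Finset.sum_filter]
  exact Finset.sum_congr rfl fun p hp => by rw [testBit_block c W (Finset.mem_range.1 hp)]

theorem pairing_block (hF : F.slices.length = m) (hd : 0 < d) (h : d * m < 2 ^ k) (c : ℕ)
    (hp : p < 2 ^ k) :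
    pairing k d ((Nat.ofDigits (2 ^ 2 ^ k) (F.slices.map (block k c)) >>> p) &&&
      Nat.ofDigits (2 ^ 2 ^ k) (F.slices.map fun _ => 1)) =
    packing k d fun a b => (word m F.slices (2 ^ k * c + p) a).val *
      (word m F.slices (2 ^ k * c + p) b).val := by
  have h_lt : ∀ u ∈ F.slices.map (block k c), u < 2 ^ 2 ^ k := by
    rintro _ hu
    obtain ⟨v, -, rfl⟩ := List.mem_map.1 hu
    exact block_lt k c v
  have h_and := shiftRight_and_ofDigits_ones hp h_lt
  simp only [List.map_map, Function.comp_def, testBit_block c _ hp] at h_and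
  rw [h_and, map_testBit_eq_ofFn hF, pairing_ofDigits hd h]

theorem pairSum_eq_packing (hF : F.slices.length = m) (hd : 0 < d) (h : d * m < 2 ^ k) {W : ℕ}
    (hW : ∀ j, W.testBit j → j < F.card) :
    F.pairSum k d W = packing k d (∑ j ∈ range F.card with W.testBit j,
      fun a b => (word m F.slices j a).val * (word m F.slices j b).val) := by
  rw [pairSum, ← packing_sum, Finset.sum_filter]
  simp only [sum_map_bitPositions_block]
  calc
    _ = ∑ c ∈ range (F.card / 2 ^ k + 1), ∑ p ∈ range (2 ^ k),
          if W.testBit (2 ^ k * c + p) then packing k d fun a b =>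
            (word m F.slices (2 ^ k * c + p) a).val * (word m F.slices (2 ^ k * c + p) b).val
          else 0 :=
      Finset.sum_congr rfl fun c _ => Finset.sum_congr rfl fun p hp => by
        rw [pairing_block hF hd h c (Finset.mem_range.1 hp)]
    _ = ∑ j ∈ range (2 ^ k * (F.card / 2 ^ k + 1)), if W.testBit j then packing k d fun a b =>
          (word m F.slices j a).val * (word m F.slices j b).val else 0 :=
      sum_range_sum_range_mul_add _ _ fun j => if W.testBit j then packing k d fun a b =>
        (word m F.slices j a).val * (word m F.slices j b).val else 0
    _ = _ := by
      have h_card := Nat.lt_mul_div_succ F.card (Nat.two_pow_pos k)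
      refine (Finset.sum_subset (Finset.range_subset_range.2 h_card.le) fun j _ hj => ?_).symm
      exact if_neg fun hWj => hj (Finset.mem_range.2 (hW j hWj))

theorem Enumerates.ncard_sep (hF : Enumerates F S) (P : (Fin m → ZMod 2) → Prop)
    [DecidablePred P] : {x ∈ S | P x}.ncard = #{j ∈ range F.card | P (word m F.slices j)} := by
  have h_image : {x ∈ S | P x} =
      word m F.slices '' ({j ∈ range F.card | P (word m F.slices j)} : Finset ℕ) := by
    rw [← hF.bijOn.image_eq]
    ext x
    constructor
    · rintro ⟨⟨j, hj, rfl⟩, hx⟩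
      exact ⟨j, by simpa using ⟨hj, hx⟩, rfl⟩
    · rintro ⟨j, hj, rfl⟩
      obtain ⟨hj, hx⟩ := Finset.mem_filter.1 hj
      exact ⟨⟨j, Finset.mem_range.1 hj, rfl⟩, hx⟩
  rw [h_image, Set.InjOn.ncard_image (hF.bijOn.injOn.mono _), Set.ncard_coe_finset]
  exact fun j hj => Finset.mem_range.1 (Finset.mem_filter.1 hj).1

theorem Enumerates.pairDegree_eq_card (hF : Enumerates F S) (w : ℕ) (a b : Fin m) :
    pairDegree {x ∈ S | wt x = w} a b = #{j ∈ range F.card | wt (word m F.slices j) = w ∧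
      word m F.slices j a ≠ 0 ∧ word m F.slices j b ≠ 0} :=
  (congrArg Set.ncard (Set.ext fun _ => and_assoc)).trans
    (hF.ncard_sep fun x => wt x = w ∧ x a ≠ 0 ∧ x b ≠ 0)

theorem Enumerates.pairDegree_eq_sum (hF : Enumerates F S) (w : ℕ) (a b : Fin m) :
    pairDegree {x ∈ S | wt x = w} a b = ∑ j ∈ range F.card with wt (word m F.slices j) = w,
      (word m F.slices j a).val * (word m F.slices j b).val := by
  have h_ite : ∀ u v : ZMod 2, u.val * v.val = if u ≠ 0 ∧ v ≠ 0 then 1 else 0 := by decide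
  rw [hF.pairDegree_eq_card, ← Finset.filter_filter, Finset.card_filter]
  exact Finset.sum_congr rfl fun j _ => (h_ite _ _).symm

theorem Enumerates.pairDegree_le_card (hF : Enumerates F S) (w : ℕ) (a b : Fin m) :
    pairDegree {x ∈ S | wt x = w} a b ≤ F.card := by
  rw [hF.pairDegree_eq_card]
  exact (Finset.card_filter_le _ _).trans_eq (Finset.card_range _)

theorem Enumerates.pairSum_weightMask (hF : Enumerates F S) (hd : 0 < d) (h : d * m < 2 ^ k)
    (w : ℕ) : F.pairSum k d (F.weightMask w) = packing k d (pairDegree {x ∈ S | wt x = w}) := by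
  have h_mask := testBit_weightMask hF.length_slices w
  rw [pairSum_eq_packing hF.length_slices hd h fun j hj => by simp_all]
  congr 1
  funext a b
  rw [hF.pairDegree_eq_sum, Finset.sum_apply, Finset.sum_apply]
  refine Finset.sum_congr (Finset.filter_congr fun j hj => ?_) fun _ _ => rfl
  simp [h_mask, Finset.mem_range.1 hj]

theorem Enumerates.sumSq_pairSum_add (hF : Enumerates F S) (hG : Enumerates G T) (hd : 0 < d)
    (h : d * m < 2 ^ k) (hcard : F.card + G.card < 2 ^ d) {w : ℕ}
    (hST : Disjoint {x ∈ S | wt x = w} {x ∈ T | wt x = w}) :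
    sumSq k d m (F.pairSum k d (F.weightMask w) + G.pairSum k d (G.weightMask w)) =
      pairMoment ({x ∈ S | wt x = w} ∪ {x ∈ T | wt x = w}) := by
  rw [hF.pairSum_weightMask hd h, hG.pairSum_weightMask hd h, packing_add, ← pairDegree_union hST,
    sumSq_packing hd h.le fun a b => ?_, pairMoment]
  rw [pairDegree_union hST]
  exact (add_le_add (hF.pairDegree_le_card w a b) (hG.pairDegree_le_card w a b)).trans_lt hcard

end PairCount

end WordFamily

section LightWords

variable {m n l r w : ℕ}

theorem sep_wt_eq_union (K : Set (Fin (m + n) → ZMod 2)) (hw : w ≤ l + r + 1) :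
    {x ∈ K | wt x = w} = {x ∈ {x | wt (x ∘ Fin.castAdd n) ≤ l ∧ x ∈ K} | wt x = w} ∪
      {x ∈ {x | wt (x ∘ Fin.natAdd m) ≤ r ∧ x ∈ K} | wt x = w} := by
  ext x
  have h_wt := wt_castAdd_add_wt_natAdd x
  constructor
  · rintro ⟨hx, rfl⟩
    obtain h | h : wt (x ∘ Fin.castAdd n) ≤ l ∨ wt (x ∘ Fin.natAdd m) ≤ r := by lia
    exacts [.inl ⟨⟨h, hx⟩, rfl⟩, .inr ⟨⟨h, hx⟩, rfl⟩]
  · rintro (⟨⟨-, hx⟩, h⟩ | ⟨⟨-, hx⟩, h⟩) <;> exact ⟨hx, h⟩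

theorem disjoint_sep_wt_eq (K : Set (Fin (m + n) → ZMod 2)) (hw : l + r < w) :
    Disjoint {x ∈ {x | wt (x ∘ Fin.castAdd n) ≤ l ∧ x ∈ K} | wt x = w}
      {x ∈ {x | wt (x ∘ Fin.natAdd m) ≤ r ∧ x ∈ K} | wt x = w} := by
  rw [Set.disjoint_left]
  rintro x ⟨⟨hl, -⟩, h⟩ ⟨⟨hr, -⟩, -⟩
  have h_wt := wt_castAdd_add_wt_natAdd x
  lia

end LightWords

namespace WordFamily

section Coset

variable {m l r w : ℕ} {rows cols : List ℕ}

/-- The lists `rows` and `cols` encode the rows and the columns of the same orthogonal `m × m`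
matrix. -/
structure EncodesOrthogonal (m : ℕ) (rows cols : List ℕ) : Prop where
  length_rows : rows.length = m
  length_cols : cols.length = m
  transpose_ofRows : (ofRows m m rows)ᵀ = ofRows m m cols
  mul_transpose : ofRows m m rows * (ofRows m m rows)ᵀ = 1

/-- The second moment of the pair degrees of the words of weight `l + r + 1` in a coset of the code
generated by `(1 | A)`, where `rows` and `cols` encode `A`; see `cosetMoment_eq_pairMoment`. -/
def cosetMoment (m l r k d : ℕ) (rows cols : List ℕ) (t : ℕ) : ℕ :=
  let L := leftFamily m l rows cols t
  let R := rightFamily m r rows cols t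
  sumSq k d (m + m)
    (L.pairSum k d (L.weightMask (l + r + 1)) + R.pairSum k d (R.weightMask (l + r + 1)))

theorem Enumerates.wt_ne_of_weightMask_eq_zero {F : WordFamily} {S : Set (Fin m → ZMod 2)}
    (hF : Enumerates F S) (h : F.weightMask w = 0) {x : Fin m → ZMod 2} (hx : x ∈ S) :
    wt x ≠ w := by
  rintro rfl
  obtain ⟨j, hj, rfl⟩ := hF.bijOn.surjOn hx
  have h_mask := testBit_weightMask hF.length_slices (wt (word m F.slices j)) j
  rw [h, Nat.zero_testBit] at h_mask
  simp_all

theorem EncodesOrthogonal.wt_ne_of_weightMask_eq_zero (hA : EncodesOrthogonal m rows cols)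
    (hw : w ≤ l + r + 1) {t : ℕ} (hl : (leftFamily m l rows cols t).weightMask w = 0)
    (hr : (rightFamily m r rows cols t).weightMask w = 0) {x : Fin (m + m) → ZMod 2}
    (hx : x + digits (m + m) t ∈ systematicCode (ofRows m m rows)) : wt x ≠ w := by
  obtain ⟨h_rows, h_cols, h_transpose, h_mul⟩ := hA
  intro h
  have h_mem : x ∈ {x ∈ {x | x + digits (m + m) t ∈ systematicCode (ofRows m m rows)} | wt x = w} :=
    ⟨hx, h⟩
  rw [sep_wt_eq_union _ hw] at h_mem
  obtain ⟨hx, -⟩ | ⟨hx, -⟩ := h_mem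
  · exact (enumerates_leftFamily h_rows h_cols h_transpose l t).wt_ne_of_weightMask_eq_zero hl hx h
  · exact (enumerates_rightFamily h_rows h_cols h_transpose h_mul r t).wt_ne_of_weightMask_eq_zero
      hr hx h

theorem EncodesOrthogonal.cosetMoment_eq_pairMoment (hA : EncodesOrthogonal m rows cols) {k d : ℕ}
    (hd : 0 < d) (h : d * (m + m) < 2 ^ k) (hcard : (light m l).card + (light m r).card < 2 ^ d)
    (t : ℕ) : cosetMoment m l r k d rows cols t = pairMoment
      {x | x + digits (m + m) t ∈ systematicCode (ofRows m m rows) ∧ wt x = l + r + 1} := by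
  obtain ⟨h_rows, h_cols, h_transpose, h_mul⟩ := hA
  refine ((enumerates_leftFamily h_rows h_cols h_transpose l t).sumSq_pairSum_add
    (enumerates_rightFamily h_rows h_cols h_transpose h_mul r t) hd h hcard
    (disjoint_sep_wt_eq _ (Nat.lt_succ_self _))).trans ?_
  exact congrArg pairMoment (sep_wt_eq_union _ le_rfl).symm

end Coset

end WordFamily

/-! ### Neighbors of a four-circulant code -/

open WordFamily

/-- The rows of a four-circulant matrix `A` with blocks `B`, `C`, `Cᵀ`, `Bᵀ` of order `14`, as
binary numbers with the first column as least significant digit. -/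
def circulantRows : List ℕ :=
  [6414954, 12813525, 25627050, 51254100, 102508200, 205000017,
   141580962, 14742852, 29469321, 58922259, 117844518, 235672653,
   202926234, 137417013, 180924609, 93413763, 186811143, 105203214,
   210406428, 152393784, 36368496, 72720609, 145424835, 22430598,
   44861196, 89722392, 179444784, 90470496]

/-- The columns of the matrix with rows `circulantRows`. -/
def circulantCols : List ℕ :=
  [6417186, 12817989, 25635978, 51255573, 102511146, 205005909,
   141576363, 14733654, 29467308, 58918233, 117836466, 235672932,
   202926792, 137418129, 144355521, 20275587, 40534791, 81069582,
   162139164, 55859256, 111718512, 223420641, 178405827, 88392582,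
   176785164, 85151256, 170302512, 72185952]

/-- A doubly even self-dual `[56, 28, 12]` code. -/
def extremalCode : Submodule (ZMod 2) (Fin 56 → ZMod 2) :=
  systematicCode (ofRows 28 28 circulantRows)

/-- Vectors of weight `10` that have minimum weight in their coset of `extremalCode`, as binary
numbers, each with the second moment of the pair degrees of the words of weight `10` of that
coset. Both were found by computer search. -/
def leaderData : Fin 92 → ℕ × ℕ :=
  ![(4402411481153, 437920), (503988249, 440608), (269519979, 441616), (324019473, 441664),
   (470033612, 441808), (269878571, 441840), (1543566352, 441920), (488247306, 441936),
   (281874488, 441984), (889793032, 442000), (872813348, 442032), (280822464, 442048),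
   (3756131, 442112), (279326882, 442224), (315889168, 442352), (857276562, 442368),
   (277519648, 442384), (412499994, 442400), (288375156, 442416), (284558465, 442432),
   (275940545, 442464), (19491092, 442544), (310653980, 442576), (377620161, 442592),
   (403457101, 442640), (268650844, 442656), (454332488, 442688), (353423636, 442704),
   (293872088, 442720), (288753864, 442784), (278399545, 442800), (269296803, 442816),
   (424331280, 442864), (304618648, 442992), (273033414, 443008), (772000, 443056),
   (308434000, 443088), (305184918, 443104), (282460427, 443120), (270208084, 443136),
   (277120458, 443168), (361251490, 443200), (353371601, 443280), (307942400, 443296),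
   (957255688, 443328), (386411272, 443360), (421568598, 443376), (815940248, 443408),
   (296513537, 443504), (1954713618, 443520), (1350058066, 443568), (271131726, 443648),
   (302555324, 443664), (398459403, 443680), (277709873, 443712), (303379476, 443760),
   (839191177, 443808), (353648730, 443824), (404885734, 443872), (3035752, 443888),
   (319602710, 443904), (294467072, 443936), (419828065, 443952), (407309408, 443968),
   (5817114, 443984), (310674634, 444048), (2911400, 444080), (404177072, 444096),
   (901924928, 444160), (969921, 444192), (822674132, 444288), (377488779, 444320),
   (2358336, 444352), (277381215, 444512), (423118352, 444592), (839713050, 444624),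
   (275289185, 444656), (4481645, 444720), (277250410, 444752), (345003019, 444784),
   (288630281, 444800), (1233516, 444848), (939869219, 444880), (291901732, 444960),
   (336994508, 444992), (707522, 445056), (405099680, 445088), (891818146, 445104),
   (1376862531, 445312), (306579499, 445376), (18400453, 445664), (1361578596, 445680)]

/-- The coset leader encoded by the `i`th entry of `leaderData`. -/
def leader (i : Fin 92) : Fin 56 → ZMod 2 :=
  digits 56 (leaderData i).1

theorem encodesOrthogonal_circulant : EncodesOrthogonal 28 circulantRows circulantCols where
  length_rows := rfl
  length_cols := rfl
  transpose_ofRows := by decide +kernel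
  mul_transpose := by decide +kernel

theorem wt_systematicRow_circulant :
    ∀ k, wt (systematicRow (ofRows 28 28 circulantRows) k) = 12 := by
  decide +kernel

theorem isDoublyEvenSelfDual_extremalCode : IsDoublyEvenSelfDual extremalCode :=
  isDoublyEvenSelfDual_systematicCode encodesOrthogonal_circulant.mul_transpose fun k => by
    norm_num [wt_systematicRow_circulant k]

theorem weightMask_zero_coset : ∀ w ∈ [4, 8],
    (leftFamily 28 5 circulantRows circulantCols 0).weightMask w = 0 ∧
      (rightFamily 28 4 circulantRows circulantCols 0).weightMask w = 0 := by
  decide +kernel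

theorem twelve_le_wt_of_mem_extremalCode {x : Fin 56 → ZMod 2} (hx : x ∈ extremalCode)
    (h0 : x ≠ 0) : 12 ≤ wt x := by
  have h_ne : ∀ w ∈ [4, 8], wt x ≠ w := fun w hw =>
    have h_coset : x + digits 56 0 ∈ extremalCode := by
      have h_zero : digits 56 0 = 0 := funext fun i => by simp [digits, bit]
      rwa [h_zero, add_zero]
    encodesOrthogonal_circulant.wt_ne_of_weightMask_eq_zero
      (show w ≤ 5 + 4 + 1 by simp at hw; lia) (weightMask_zero_coset w hw).1
      (weightMask_zero_coset w hw).2 h_coset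
  have h_pos : 0 < wt x := hammingNorm_pos_iff.2 h0
  have h_four := isDoublyEvenSelfDual_extremalCode.four_dvd_wt x hx
  have h4 := h_ne 4 (by simp)
  have h8 := h_ne 8 (by simp)
  lia

theorem wt_leader : ∀ i, wt (leader i) = 10 := by
  decide +kernel

set_option maxHeartbeats 0 in
-- Deciding four cosets in one term lets the kernel enumerate the light halves only once for them.
theorem leaderData_spec (i : Fin 92) :
    (∀ w < 10,
      (leftFamily 28 5 circulantRows circulantCols (leaderData i).1).weightMask w = 0 ∧
        (rightFamily 28 4 circulantRows circulantCols (leaderData i).1).weightMask w = 0) ∧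
      cosetMoment 28 5 4 12 18 circulantRows circulantCols (leaderData i).1 = (leaderData i).2 := by
  obtain ⟨⟨k, j⟩, rfl⟩ := (finProdFinEquiv : Fin 23 × Fin 4 ≃ Fin 92).surjective i
  revert j
  fin_cases k <;> decide +kernel

theorem ten_le_wt_of_add_leader_mem (i : Fin 92) {x : Fin 56 → ZMod 2}
    (hx : x + leader i ∈ extremalCode) : 10 ≤ wt x := by
  by_contra! h
  obtain ⟨h_left, h_right⟩ := (leaderData_spec i).1 (wt x) h
  exact encodesOrthogonal_circulant.wt_ne_of_weightMask_eq_zero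
    (show wt x ≤ 5 + 4 + 1 by lia) h_left h_right hx rfl

theorem pairMoment_evenNeighbor_leader (i : Fin 92) :
    pairMoment {x | x ∈ evenNeighbor extremalCode (leader i) ∧ wt x = 10} = (leaderData i).2 := by
  have h_words := isDoublyEvenSelfDual_extremalCode.words_evenNeighbor
    (show wt (leader i) % 4 = 2 by rw [wt_leader i])
  rw [wt_leader i] at h_words
  have h_moment := encodesOrthogonal_circulant.cosetMoment_eq_pairMoment (l := 5) (r := 4)
    (k := 12) (d := 18) (by norm_num) (by norm_num) (by decide +kernel) (leaderData i).1
  rw [h_words, ← (leaderData_spec i).2]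
  exact h_moment.symm

theorem exists_wt_eq_twelve_dotProduct_leader (i : Fin 92) :
    ∃ d ∈ extremalCode, wt d = 12 ∧ leader i ⬝ᵥ d = 1 := by
  have h_span : Submodule.span (ZMod 2)
      (Set.range (systematicRow (ofRows 28 28 circulantRows))) = extremalCode :=
    span_range_systematicRow _
  obtain ⟨_, ⟨k, rfl⟩, hk⟩ := isDoublyEvenSelfDual_extremalCode.exists_dotProduct_eq_one_of_span
    (show wt (leader i) % 4 = 2 by rw [wt_leader i]) h_span
  exact ⟨_, h_span ▸ Submodule.subset_span (Set.mem_range_self k), wt_systematicRow_circulant k, hk⟩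

theorem strictMono_snd_leaderData : StrictMono fun i => (leaderData i).2 :=
  Fin.strictMono_iff_lt_succ.2 (by decide +kernel)

/-- There exist at least 92 pairwise inequivalent s-extremal singly even self-dual
`[56, 28, 10]` codes: singly even self-dual codes of length 56 with minimum weight 10
whose shadows have minimum weight 12. -/
theorem exists_92_sExtremal_56 :
    ∃ f : Fin 92 → Submodule (ZMod 2) (Fin 56 → ZMod 2),
      (∀ i, IsSinglyEvenSelfDual (f i) ∧
        Module.finrank (ZMod 2) (f i) = 28 ∧
        minWt (f i) = 10 ∧
        minWtSet (shadow (f i)) = 12) ∧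
      ∀ i j, i ≠ j → ¬ CodeEquiv (f i) (f j) := by
  have hD := isDoublyEvenSelfDual_extremalCode
  have h_two (i) : wt (leader i) % 4 = 2 := by rw [wt_leader i]
  have h_code (i x) (hx : x ∈ extremalCode) (h0 : x ≠ 0) : wt (leader i) + 2 ≤ wt x := by
    rw [wt_leader i]
    exact twelve_le_wt_of_mem_extremalCode hx h0
  have h_coset (i x) (hx : x + leader i ∈ extremalCode) : wt (leader i) ≤ wt x := by
    rw [wt_leader i]
    exact ten_le_wt_of_add_leader_mem i hx
  refine ⟨fun i => evenNeighbor extremalCode (leader i), fun i => ⟨?_, ?_, ?_, ?_⟩,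
    fun i j hij h_equiv => hij (strictMono_snd_leaderData.injective ?_)⟩
  · exact hD.isSinglyEvenSelfDual_evenNeighbor (h_two i)
  · have := (hD.isSelfDual_evenNeighbor (h_two i)).two_mul_finrank
    lia
  · exact (hD.minWt_evenNeighbor (h_two i) (fun x hx h0 => le_of_add_le_left (h_code i x hx h0))
      (h_coset i)).trans (wt_leader i)
  · obtain ⟨d, hd, hd_wt, hk⟩ := exists_wt_eq_twelve_dotProduct_leader i
    rw [hD.minWtSet_shadow_evenNeighbor (h_two i) (h_code i) (h_coset i) hd
      (by rw [hd_wt, wt_leader i]) hk, wt_leader i]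
  · rw [← pairMoment_evenNeighbor_leader, ← pairMoment_evenNeighbor_leader]
    exact (h_equiv.pairMoment_eq 10).symm
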